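/- Let u_{1,0}, u_{2,0}, y_{1,0}, y_{2,0} be nonnegative, Lipschitz continuous and bounded functions on ℝ. Then there exist M_1, M_2 > 0 and T ∈ (0,1] with the following property: for every pair (u_1,u_2) ∈ C^{1,1/2}(ℝ×[0,T])² with ‖u_i‖_{1,1/2} ≤ M_i (i = 1,2), if y_i(x,t) = y_{i,0}(x)·exp(−A_i ∫_0^t f̃(u_i(x,s))ds) and w_i is the bounded solution in C^{2,1}(ℝ×(0,T]) ∩ C^{1,1/2}(ℝ×[0,T]) of the linear parabolic Cauchy problem (w_i)_t − α_i(y_i)(w_i)_{xx} + β_i(y_i)(w_i)_x = f̃_i(y_i,u_1,u_2) on ℝ×(0,T] with w_i(·,0) = u_{i,0}, then ‖w_i‖_{1,1/2} ≤ M_i for i = 1,2. In particular, the map (u_1,u_2) ↦ (w_1,w_2) is well defined on, and maps into, the set Σ = {(u_1,u_2) : ‖u_i‖_{1,1/2} ≤ M_i, i = 1,2}. -/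

import Mathlib

/-!
The bounds on `w i` follow from maximum principle arguments on `ℝ × [0, T]`, with no use of heat
kernels. Write the equation as `w_t - σ² w_xx + β w_x = F`. When `u` ranges over the ball of radii
`M`, the concentration `y` takes values in a fixed interval and is Lipschitz in `x` uniformly in
`T ≤ 1`; hence `σ`, `β`, `F` are bounded and Lipschitz in `x` with constants depending on `M`, while
`σ² ≤ lam / a` holds independently of `M` (`yfun_bounds`, `component`).

* Supremum: `|w| ≤ sup |u₀| + T sup |F|`.
* Lipschitz bound in `x` (`doubling_le`): doubling of variables, comparing `w(x,t) - w(x',t)` with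
  `(L₀ + K t) √(h² + (x - x')²)`, where `L₀` is the Lipschitz constant of `u₀`; so the constant is at
  most `L₀ + 1` when `K T ≤ 1`.
* Hölder bound in `t` (`barrier_le`): for `t ≥ t₀`, the function
  `w(x₀,t₀) + L √(h² + (x - x₀)²) + C (t - t₀)` with `L = L₀ + 1` and `C = L σ²_max / h + L |β|_max + |F|_max`
  is a supersolution; at `x = x₀` and `h = √(t - t₀)` it gives the constant
  `L (1 + lam / a) + (L |β|_max + |F|_max) √T`.

All quantities depending on `M` come multiplied by a positive power of `T`. So the radii `M` are
fixed first, from the initial data and `lam / a` alone, and then `T` is taken small. Unboundedness of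
the domain is handled by a penalty `δ e^{Kt} (1 + x²)` (`penalised_le`).
-/

open MeasureTheory

noncomputable section

/-- The modified Arrhenius function: `f̃(s) = exp(-E/s)` for `s > 0`, `f̃(s) = 0` for `s ≤ 0`. -/
def ftil (E s : ℝ) : ℝ := if 0 < s then Real.exp (-(E / s)) else 0

/-- Partial derivative in time of `u = u(x,t)`. -/
def pdT (u : ℝ → ℝ → ℝ) (x t : ℝ) : ℝ := deriv (fun s => u x s) t

/-- Partial derivative in space of `u = u(x,t)`. -/
def pdX (u : ℝ → ℝ → ℝ) (x t : ℝ) : ℝ := deriv (fun y => u y t) x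

/-- Second partial derivative in space of `u = u(x,t)`. -/
def pdXX (u : ℝ → ℝ → ℝ) (x t : ℝ) : ℝ := deriv (fun y => pdX u y t) x

/-- The class `C^{α,α/2}(S)`: bounded functions, Hölder continuous with exponent `α` in `x`
and `α/2` in `t` on `S`. -/
def HolderClass (S : Set (ℝ × ℝ)) (α : ℝ) (u : ℝ → ℝ → ℝ) : Prop :=
  ∃ C : ℝ, (∀ p ∈ S, |u p.1 p.2| ≤ C) ∧
    ∀ p ∈ S, ∀ q ∈ S,
      |u p.1 p.2 - u q.1 q.2| ≤ C * (|p.1 - q.1| ^ α + |p.2 - q.2| ^ (α / 2))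

/-- The class `C^{2,1}(S)`: twice continuously differentiable in `x`, once in `t`, on `S`. -/
def C21 (S : Set (ℝ × ℝ)) (u : ℝ → ℝ → ℝ) : Prop :=
  (∀ p ∈ S,
      DifferentiableAt ℝ (fun y => u y p.2) p.1 ∧
      DifferentiableAt ℝ (fun y => pdX u y p.2) p.1 ∧
      DifferentiableAt ℝ (fun s => u p.1 s) p.2) ∧
  ContinuousOn (fun p : ℝ × ℝ => u p.1 p.2) S ∧
  ContinuousOn (fun p : ℝ × ℝ => pdX u p.1 p.2) S ∧
  ContinuousOn (fun p : ℝ × ℝ => pdXX u p.1 p.2) S ∧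
  ContinuousOn (fun p : ℝ × ℝ => pdT u p.1 p.2) S

/-- The sup norm `‖g‖_∞` of a function on `ℝ`. -/
def supAbs (g : ℝ → ℝ) : ℝ := ⨆ x, |g x|

/-- The fuel concentration `y_i` determined from the temperature:
`y(x,t) = y₀(x)·exp(-A ∫₀ᵗ f̃(w(x,s)) ds)`. -/
def yfun (E A : ℝ) (y0 : ℝ → ℝ) (w : ℝ → ℝ → ℝ) (x t : ℝ) : ℝ :=
  y0 x * Real.exp (-A * ∫ s in (0:ℝ)..t, ftil E (w x s))

/-- The reaction function
`f̃ᵢ(y,u₁,u₂) = ((bᵢAᵢuᵢ + dᵢ)·y·f̃(uᵢ) + (-1)^i q (u₁ - u₂)) / (aᵢ + bᵢ y)`,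
where `ui` denotes the `i`-th component and `sgn = (-1)^i`. -/
def fitil (E q bi Ai di ai sgn y ui u1 u2 : ℝ) : ℝ :=
  ((bi * Ai * ui + di) * y * ftil E ui + sgn * q * (u1 - u2)) / (ai + bi * y)

/-- The upper solution `φ(t) = (M+β)e^{αt} - β` with
`M = max ‖u_{i,0}‖_∞`, `α = max A_i b_i ‖y_{i,0}‖_∞ / a_i`, `β = max d_i/(A_i b_i)`. -/
def phiUp (a b d A : Fin 2 → ℝ) (u0 y0 : Fin 2 → ℝ → ℝ) (t : ℝ) : ℝ :=
  (max (supAbs (u0 0)) (supAbs (u0 1)) + max (d 0 / (A 0 * b 0)) (d 1 / (A 1 * b 1))) *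
      Real.exp (max (A 0 * b 0 * supAbs (y0 0) / a 0) (A 1 * b 1 * supAbs (y0 1) / a 1) * t) -
    max (d 0 / (A 0 * b 0)) (d 1 / (A 1 * b 1))

/-- `u = (u₁,u₂)` is a solution of the Cauchy problem on `ℝ × [0,T]` in the class
`C^{2,1}(ℝ×(0,T]) ∩ C^{1,1/2}(ℝ×[0,T])`, lying in the sector `⟨0,φ⟩_T`. -/
def IsSol (E q : ℝ) (lam a b c d A : Fin 2 → ℝ) (u0 y0 : Fin 2 → ℝ → ℝ)
    (T : ℝ) (u : Fin 2 → ℝ → ℝ → ℝ) : Prop :=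
  (∀ i, C21 {p : ℝ × ℝ | 0 < p.2 ∧ p.2 ≤ T} (u i)) ∧
  (∀ i, HolderClass {p : ℝ × ℝ | 0 ≤ p.2 ∧ p.2 ≤ T} 1 (u i)) ∧
  (∀ i x, u i x 0 = u0 i x) ∧
  (∀ i x t, 0 < t → t ≤ T →
      pdT (u i) x t
        - lam i / (a i + b i * yfun E (A i) (y0 i) (u i) x t) * pdXX (u i) x t
        + c i / (a i + b i * yfun E (A i) (y0 i) (u i) x t) * pdX (u i) x t
      = fitil E q (b i) (A i) (d i) (a i) ((-1 : ℝ) ^ ((i : ℕ) + 1))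
          (yfun E (A i) (y0 i) (u i) x t) (u i x t) (u 0 x t) (u 1 x t)) ∧
  (∀ i x t, 0 ≤ t → t ≤ T → 0 ≤ u i x t ∧ u i x t ≤ phiUp a b d A u0 y0 t)

end

noncomputable section

/-- The norm `‖u‖_{1,1/2}` on `C^{1,1/2}(ℝ×[0,T])`:
`sup |u| + sup |u(x,t)-u(x',t')| / (|x-x'| + |t-t'|^{1/2})`. -/
def norm11 (T : ℝ) (u : ℝ → ℝ → ℝ) : ℝ :=
  sSup {r : ℝ | ∃ x t, 0 ≤ t ∧ t ≤ T ∧ r = |u x t|} +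
  sSup {r : ℝ | ∃ x t x' t', 0 ≤ t ∧ t ≤ T ∧ 0 ≤ t' ∧ t' ≤ T ∧ ¬(x = x' ∧ t = t') ∧
    r = |u x t - u x' t'| / (|x - x'| + |t - t'| ^ (1/2 : ℝ))}

end

/-! ### Maximum points -/

open Set Filter Topology in
/-- Maximum principle on an unbounded domain, reduced to excluding maxima: a function `V` bounded
above with `V ≤ 0` at the initial time is nonpositive as soon as no `V - δ e^{Kt} P` (with `P` a
coercive penalty) attains its maximum after the initial time. -/
lemma penalised_le {X : Type*} [TopologicalSpace X] (P : X → ℝ) (hP0 : ∀ z, 0 ≤ P z)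
    (hPc : Continuous P) (hPcpt : ∀ R, IsCompact {z | P z ≤ R})
    (V : X → ℝ → ℝ) (t0 T K B : ℝ) (hK : 0 ≤ K) (ht0 : 0 ≤ t0)
    (hV : ContinuousOn (fun p : X × ℝ => V p.1 p.2) (univ ×ˢ Icc t0 T))
    (hB : ∀ z, ∀ t ∈ Icc t0 T, V z t ≤ B) (h0 : ∀ z, V z t0 ≤ 0)
    (hmax : ∀ δ > 0, ∀ z0 t, t0 < t → t ≤ T →
      (∀ z, ∀ s ∈ Icc t0 T, V z s - δ * Real.exp (K * s) * P z
        ≤ V z0 t - δ * Real.exp (K * t) * P z0) → False) :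
    ∀ z, ∀ t ∈ Icc t0 T, V z t ≤ 0 := by
  intro z1 t1 ht1
  by_contra! hpos
  set e1 := Real.exp (K * t1) with he1
  have he1pos : 0 < e1 := Real.exp_pos _
  have hP1 := hP0 z1
  set δ := V z1 t1 / (2 * (e1 * (P z1 + 1))) with hδ
  have hden : 0 < 2 * (e1 * (P z1 + 1)) := by positivity
  have hδpos : 0 < δ := div_pos hpos hden
  set G : X × ℝ → ℝ := fun p => V p.1 p.2 - δ * Real.exp (K * p.2) * P p.1 with hG
  have hG1 : 0 < G (z1, t1) := by
    have h1 : δ * (2 * (e1 * (P z1 + 1))) = V z1 t1 := by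
      rw [hδ]; field_simp
    have h2 : 0 < δ * e1 := mul_pos hδpos he1pos
    have h3 : 0 ≤ δ * e1 * P z1 := mul_nonneg h2.le hP1
    simp only [hG]
    rw [← h1, ← he1]
    nlinarith
  set R := max (B / δ) (P z1)
  have hGc : ContinuousOn G ({z | P z ≤ R} ×ˢ Icc t0 T) := by
    apply ContinuousOn.sub (hV.mono (prod_mono (subset_univ _) subset_rfl))
    exact Continuous.continuousOn (by fun_prop)
  obtain ⟨⟨z0, t⟩, ⟨hz0, ht⟩, hm⟩ := ((hPcpt R).prod isCompact_Icc).exists_isMaxOn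
    ⟨(z1, t1), le_max_right (B / δ) (P z1), ht1⟩ hGc
  have hm1 : G (z1, t1) ≤ G (z0, t) := hm ⟨le_max_right (B / δ) (P z1), ht1⟩
  have hglob : ∀ z, ∀ s ∈ Icc t0 T, G (z, s) ≤ G (z0, t) := by
    intro z s hs
    by_cases hz : P z ≤ R
    · exact hm ⟨hz, hs⟩
    · push Not at hz
      have h1 : B / δ < P z := lt_of_le_of_lt (le_max_left _ _) hz
      rw [div_lt_iff₀ hδpos] at h1
      have h2 : 1 ≤ Real.exp (K * s) := Real.one_le_exp (mul_nonneg hK (ht0.trans hs.1))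
      have h3 := hB z s hs
      have h4 : δ * P z ≤ δ * Real.exp (K * s) * P z := by
        have := mul_nonneg hδpos.le (hP0 z)
        nlinarith
      have : G (z, s) < 0 := by simp only [hG]; nlinarith
      linarith
  have htt : t0 < t := by
    rcases eq_or_lt_of_le ht.1 with h | h
    · exfalso
      have h5 : G (z0, t) ≤ 0 := by
        have := h0 z0
        have h6 : 0 ≤ δ * Real.exp (K * t) * P z0 :=
          mul_nonneg (mul_nonneg hδpos.le (Real.exp_pos _).le) (hP0 z0)
        simp only at h
        simp only [hG]
        rw [← h] at h6 ⊢
        linarith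
      linarith
    · exact h
  exact hmax δ hδpos z0 t htt ht.2 hglob

open Set Filter Topology in
lemma deriv_nonneg_of_left_max {g : ℝ → ℝ} {g' t0 t : ℝ} (hg : HasDerivAt g g' t) (ht : t0 < t)
    (h : ∀ s ∈ Icc t0 t, g s ≤ g t) : 0 ≤ g' := by
  have h1 := (hasDerivAt_iff_tendsto_slope_left_right.1 hg).1
  refine ge_of_tendsto h1 ?_
  filter_upwards [Ioo_mem_nhdsLT ht] with s hs
  rw [slope_def_field]
  exact div_nonneg_of_nonpos (by linarith [h s ⟨hs.1.le, hs.2.le⟩]) (by linarith [hs.2])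

open Set Filter Topology in
lemma second_deriv_nonpos_of_max {g g' : ℝ → ℝ} {g'' : ℝ} (hg : ∀ s, HasDerivAt g (g' s) s)
    (hg' : HasDerivAt g' g'' 0) (h : ∀ s, g s ≤ g 0) : g' 0 = 0 ∧ g'' ≤ 0 := by
  have hmax : IsLocalMax g 0 := Eventually.of_forall h
  have h0 : g' 0 = 0 := hmax.hasDerivAt_eq_zero (hg 0)
  refine ⟨h0, ?_⟩
  by_contra! hpos
  have hd : deriv g = g' := funext fun s => (hg s).deriv
  have hmin : IsLocalMin g 0 := isLocalMin_of_deriv_deriv_pos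
    (by rw [hd, hg'.deriv]; exact hpos) (by rw [hd, h0]) (hg 0).continuousAt
  have hc : g =ᶠ[𝓝 0] fun _ => g 0 := by
    filter_upwards [hmin] with s hs
    exact le_antisymm (h s) hs
  have h2 : g' =ᶠ[𝓝 0] fun _ => 0 := by
    rw [← hd]
    have := hc.deriv
    simpa using this
  have h3 := h2.deriv_eq
  rw [hg'.deriv] at h3
  simp at h3
  linarith

/-! ### A smoothed absolute value -/

/-- The smoothed absolute value `r ↦ √(h² + r²)`. -/
noncomputable def sabs (h r : ℝ) : ℝ := Real.sqrt (h ^ 2 + r ^ 2)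

lemma sabs_sq (h r : ℝ) : sabs h r ^ 2 = h ^ 2 + r ^ 2 := Real.sq_sqrt (by positivity)

lemma sabs_pos {h : ℝ} (hh : 0 < h) (r : ℝ) : 0 < sabs h r := Real.sqrt_pos.2 (by positivity)

lemma le_sabs (h r : ℝ) : h ≤ sabs h r :=
  Real.le_sqrt_of_sq_le (by nlinarith)

lemma abs_le_sabs (h r : ℝ) : |r| ≤ sabs h r :=
  Real.abs_le_sqrt (by nlinarith)

lemma sabs_le {h : ℝ} (hh : 0 < h) (r : ℝ) : sabs h r ≤ |r| + h := by
  refine Real.sqrt_le_iff.2 ⟨by positivity, ?_⟩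
  nlinarith [sq_abs r, abs_nonneg r, mul_nonneg (abs_nonneg r) hh.le]

lemma continuous_sabs (h : ℝ) : Continuous (sabs h) := by unfold sabs; fun_prop

lemma hasDerivAt_sabs {h : ℝ} (hh : 0 < h) (r : ℝ) : HasDerivAt (sabs h) (r / sabs h r) r := by
  have h1 : HasDerivAt (fun r : ℝ => h ^ 2 + r ^ 2) (2 * r) r := by
    simpa using ((hasDerivAt_pow 2 r).const_add (h ^ 2))
  have h2 := h1.sqrt (by positivity)
  refine h2.congr_deriv ?_
  rw [sabs]
  field_simp

lemma hasDerivAt_sabs' {h : ℝ} (hh : 0 < h) (r : ℝ) :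
    HasDerivAt (fun r => r / sabs h r) (h ^ 2 / sabs h r ^ 3) r := by
  have h1 := (hasDerivAt_id r).div (hasDerivAt_sabs hh r) (sabs_pos hh r).ne'
  refine h1.congr_deriv ?_
  have := (sabs_pos hh r).ne'
  have h2 := sabs_sq h r
  simp only [id]
  field_simp
  linarith

lemma abs_sabs_deriv_le {h : ℝ} (hh : 0 < h) (r : ℝ) : |r / sabs h r| ≤ 1 := by
  rw [abs_div, abs_of_pos (sabs_pos hh r)]
  exact (div_le_one (sabs_pos hh r)).2 (abs_le_sabs h r)

lemma sabs_deriv2_nonneg {h : ℝ} (hh : 0 < h) (r : ℝ) : 0 ≤ h ^ 2 / sabs h r ^ 3 := by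
  have := sabs_pos hh r
  positivity

lemma sabs_deriv2_le {h : ℝ} (hh : 0 < h) (r : ℝ) : h ^ 2 / sabs h r ^ 3 ≤ 1 / h := by
  have h1 := sabs_pos hh r
  have h2 := le_sabs h r
  rw [div_le_div_iff₀ (by positivity) hh]
  have : h ^ 3 ≤ sabs h r ^ 3 := by gcongr
  linarith

lemma sq_mul_sabs_deriv2_le {h : ℝ} (hh : 0 < h) (r : ℝ) :
    r ^ 2 * (h ^ 2 / sabs h r ^ 3) ≤ sabs h r := by
  have h1 := sabs_pos hh r
  rw [← mul_div_assoc, div_le_iff₀ (by positivity)]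
  have : sabs h r * sabs h r ^ 3 = (h ^ 2 + r ^ 2) ^ 2 := by rw [← sabs_sq]; ring
  rw [this]
  nlinarith [sq_nonneg (h * r), sq_nonneg (h^2), sq_nonneg (r^2)]

/-! ### Comparison with barriers and doubling of variables -/

open Set in
/-- Comparison with the explicit supersolution `C0 + L √(h² + (x - x0)²) + C (t - t0)` on
`ℝ × [t0, T]`: the smoothed absolute value has first derivative at most `1` and second derivative at
most `1/h`, so `C ≥ as L / h + bs L + Fs` suffices. -/
lemma barrier_le {w p β F : ℝ → ℝ → ℝ} {T t0 x0 h L C C0 B as bs Fs : ℝ} (ht0 : 0 ≤ t0)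
    (hh : 0 < h) (hL : 0 ≤ L) (hbs : 0 ≤ bs) (has : 0 ≤ as)
    (hw : C21 {p : ℝ × ℝ | 0 < p.2 ∧ p.2 ≤ T} w)
    (hwc : ContinuousOn (fun p : ℝ × ℝ => w p.1 p.2) (univ ×ˢ Icc 0 T))
    (hB : ∀ x, ∀ t ∈ Icc 0 T, |w x t| ≤ B)
    (hp : ∀ x t, 0 < t → t ≤ T → 0 ≤ p x t ∧ p x t ≤ as)
    (hβ : ∀ x t, 0 < t → t ≤ T → |β x t| ≤ bs)
    (hF : ∀ x t, 0 < t → t ≤ T → F x t ≤ Fs)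
    (heq : ∀ x t, 0 < t → t ≤ T →
      pdT w x t - p x t * pdXX w x t + β x t * pdX w x t = F x t)
    (hinit : ∀ x, w x t0 ≤ C0 + L * sabs h (x - x0))
    (hC : as * L / h + bs * L + Fs ≤ C) :
    ∀ x, ∀ t ∈ Icc t0 T, w x t ≤ C0 + L * sabs h (x - x0) + C * (t - t0) := by
  have hsub : Icc t0 T ⊆ Icc 0 T := Icc_subset_Icc_left ht0
  -- growth rate making `exp (K t) (1 + x²)` a strict supersolution
  set K := 2 * as + bs + 1 with hK
  have key := penalised_le (fun x : ℝ => 1 + x ^ 2) (fun z => by positivity) (by fun_prop)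
    (fun R => by
      refine Metric.isCompact_of_isClosed_isBounded
        (isClosed_le (by fun_prop) continuous_const) ?_
      refine (Metric.isBounded_closedBall (x := (0 : ℝ)) (r := R + 1)).subset fun z hz => ?_
      simp only [mem_ofPred_eq] at hz
      rw [mem_closedBall_zero_iff, Real.norm_eq_abs]
      nlinarith [sq_abs z, sq_nonneg (|z| - 1), abs_nonneg z])
    (fun x t => w x t - (C0 + L * sabs h (x - x0) + C * (t - t0))) t0 T K
    (B + |C0| + |C| * (T - t0)) (by positivity) ht0
    ?_ ?_ ?_ ?_
  · intro x t ht
    have := key x t ht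
    linarith
  · apply ContinuousOn.sub (hwc.mono (prod_mono subset_rfl hsub))
    have := continuous_sabs h
    exact Continuous.continuousOn (by fun_prop)
  · intro x t ht
    have h1 := (abs_le.1 (hB x t (hsub ht))).2
    have h2 := mul_nonneg hL (sabs_pos hh (x - x0)).le
    have h3 := neg_abs_le C0
    have h4 : -(|C| * (T - t0)) ≤ C * (t - t0) := by
      have : |C| * (t - t0) ≤ |C| * (T - t0) := by
        have := ht.2
        gcongr
      have h5 := mul_le_mul_of_nonneg_right (neg_abs_le C) (sub_nonneg.2 ht.1)
      linarith
    linarith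
  · intro x
    have := hinit x
    simp only [sub_self, mul_zero, add_zero]
    linarith
  · intro δ hδ x t htt htT hm
    have ht : 0 < t := lt_of_le_of_lt ht0 htt
    obtain ⟨hd1, hd2, hd3⟩ := hw.1 (x, t) ⟨ht, htT⟩
    simp only at hd1 hd2 hd3
    set e := Real.exp (K * t) with he
    have hepos : 0 < e := Real.exp_pos _
    set f1 := (x - x0) / sabs h (x - x0) with hf1
    set f2 := h ^ 2 / sabs h (x - x0) ^ 3 with hf2
    have hT : HasDerivAt (fun s => w x s - (C0 + L * sabs h (x - x0) + C * (s - t0))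
        - δ * Real.exp (K * s) * (1 + x ^ 2))
        (pdT w x t - C - δ * (e * K) * (1 + x ^ 2)) t := by
      have h1 : HasDerivAt (fun s => w x s) (pdT w x t) t := hd3.hasDerivAt
      have h2 : HasDerivAt (fun s => C0 + L * sabs h (x - x0) + C * (s - t0)) C t := by
        simpa using (((hasDerivAt_id t).sub_const t0).const_mul C).const_add
          (C0 + L * sabs h (x - x0))
      have h3 : HasDerivAt (fun s => Real.exp (K * s)) (e * K) t := by
        simpa using ((hasDerivAt_id t).const_mul K).exp
      exact (h1.sub h2).sub ((h3.const_mul δ).mul_const _)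
    have hT0 := deriv_nonneg_of_left_max hT htt (fun s hs => hm x s ⟨hs.1, hs.2.trans htT⟩)
    have hlin : ∀ s : ℝ, HasDerivAt (fun s : ℝ => x + s) 1 s := fun s => by
      simpa using (hasDerivAt_id s).const_add x
    have hX : ∀ s, HasDerivAt (fun s => w (x + s) t - (C0 + L * sabs h (x + s - x0) + C * (t - t0))
        - δ * e * (1 + (x + s) ^ 2))
        (pdX w (x + s) t - L * ((x + s - x0) / sabs h (x + s - x0)) - δ * e * (2 * (x + s))) s := by
      intro s
      have h1 : HasDerivAt (fun s => w (x + s) t) (pdX w (x + s) t) s := by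
        have := (hw.1 (x + s, t) ⟨ht, htT⟩).1.hasDerivAt
        exact (this.comp s (hlin s)).congr_deriv (mul_one _)
      have h2 : HasDerivAt (fun s => sabs h (x + s - x0))
          ((x + s - x0) / sabs h (x + s - x0)) s := by
        exact ((hasDerivAt_sabs hh (x + s - x0)).comp s ((hlin s).sub_const x0)).congr_deriv (mul_one _)
      have h3 : HasDerivAt (fun s => 1 + (x + s) ^ 2) (2 * (x + s)) s := by
        simpa using ((hlin s).pow 2).const_add 1
      exact (h1.sub (((h2.const_mul L).const_add C0).add_const _)).sub (h3.const_mul _)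
    have hXX : HasDerivAt (fun s => pdX w (x + s) t - L * ((x + s - x0) / sabs h (x + s - x0))
        - δ * e * (2 * (x + s))) (pdXX w x t - L * f2 - δ * e * 2) 0 := by
      have h1 : HasDerivAt (fun s => pdX w (x + s) t) (pdXX w x t) 0 := by
        have h0 : HasDerivAt (fun y => pdX w y t) (pdXX w x t) (x + 0) := by
          rw [add_zero]; exact hd2.hasDerivAt
        exact (h0.comp (0 : ℝ) (hlin 0)).congr_deriv (mul_one _)
      have h2 : HasDerivAt (fun s => (x + s - x0) / sabs h (x + s - x0)) f2 0 := by
        have h0 : HasDerivAt (fun r => r / sabs h r) f2 (x + 0 - x0) := by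
          rw [add_zero]; exact hasDerivAt_sabs' hh _
        exact (h0.comp (0 : ℝ) ((hlin 0).sub_const x0)).congr_deriv (mul_one _)
      have h3 : HasDerivAt (fun s : ℝ => 2 * (x + s)) 2 0 := by
        simpa using (hlin 0).const_mul 2
      exact (h1.sub (h2.const_mul L)).sub (h3.const_mul _)
    obtain ⟨hX0, hXX0⟩ := second_deriv_nonpos_of_max hX hXX (fun s => by
      simpa using hm (x + s) t ⟨htt.le, htT⟩)
    simp only [add_zero] at hX0
    rw [← hf1] at hX0
    have hE := heq x t ht htT
    obtain ⟨hp0, hp1⟩ := hp x t ht htT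
    have hF1 := hF x t ht htT
    have hβ1 := hβ x t ht htT
    have hf1' : |f1| ≤ 1 := abs_sabs_deriv_le hh _
    have hf2' : f2 ≤ 1 / h := sabs_deriv2_le hh _
    have hf20 : 0 ≤ f2 := sabs_deriv2_nonneg hh _
    have hδe : 0 < δ * e := mul_pos hδ hepos
    have hpx : pdX w x t = L * f1 + δ * e * (2 * x) := by linarith
    have b1 : p x t * pdXX w x t ≤ as * L / h + as * (δ * e * 2) := by
      have h1 : p x t * pdXX w x t ≤ p x t * (L * f2 + δ * e * 2) :=
        mul_le_mul_of_nonneg_left (by linarith) hp0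
      have h2 : p x t * (L * f2 + δ * e * 2) ≤ as * (L * f2 + δ * e * 2) :=
        mul_le_mul_of_nonneg_right hp1 (by positivity)
      have h3 : as * (L * f2) ≤ as * (L * (1 / h)) := by gcongr
      have h4 : as * (L * (1 / h)) = as * L / h := by ring
      linarith
    have b2 : -(β x t * pdX w x t) ≤ bs * L + δ * e * (bs * (1 + x ^ 2)) := by
      have h1 : -(β x t * f1) ≤ bs := by
        have h2 : |β x t * f1| ≤ bs * 1 := by rw [abs_mul]; gcongr
        linarith [neg_abs_le (β x t * f1)]
      have h3 : -(β x t * (2 * x)) ≤ bs * (1 + x ^ 2) := by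
        have h2 : |β x t * (2 * x)| ≤ bs * (1 + x ^ 2) := by
          rw [abs_mul]
          have : |2 * x| ≤ 1 + x ^ 2 := abs_le.2 ⟨by nlinarith [sq_nonneg (x + 1)],
            by nlinarith [sq_nonneg (x - 1)]⟩
          gcongr
        linarith [neg_abs_le (β x t * (2 * x))]
      have h4 := mul_le_mul_of_nonneg_left h1 hL
      have h5 := mul_le_mul_of_nonneg_left h3 hδe.le
      rw [hpx]
      linarith
    have b3 : δ * e * (2 * as + bs * (1 + x ^ 2)) < δ * e * (K * (1 + x ^ 2)) := by
      apply mul_lt_mul_of_pos_left _ hδe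
      rw [hK]
      nlinarith [mul_nonneg has (sq_nonneg x), sq_nonneg x]
    linarith

set_option maxHeartbeats 1000000 in
open Set in
/-- Spatial Lipschitz bound by doubling of variables: `w(x,t) - w(x',t)` is compared with
`(L0 + K t) √(h² + (x - x')²)`. At a maximum point of the penalised difference, the second derivative
in direction `(σ(x,t), σ(x',t))` leaves only `(σ(x,t) - σ(x',t))²` times the second derivative of the
smoothed absolute value, which is controlled by the comparison function as `σ` is Lipschitz. -/
lemma doubling_le {w σ β F : ℝ → ℝ → ℝ} {T h L0 K B as bs S Lb LF : ℝ}
    (hh : 0 < h) (hL0 : 0 ≤ L0) (hK0 : 0 ≤ K) (hbs : 0 ≤ bs) (has : 0 ≤ as)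
    (hLb : 0 ≤ Lb) (hLF : 0 ≤ LF)
    (hw : C21 {p : ℝ × ℝ | 0 < p.2 ∧ p.2 ≤ T} w)
    (hwc : ContinuousOn (fun p : ℝ × ℝ => w p.1 p.2) (univ ×ˢ Icc 0 T))
    (hB : ∀ x, ∀ t ∈ Icc 0 T, |w x t| ≤ B)
    (hσ : ∀ x t, 0 < t → t ≤ T → σ x t ^ 2 ≤ as)
    (hβ : ∀ x t, 0 < t → t ≤ T → |β x t| ≤ bs)
    (hσl : ∀ x x' t, 0 < t → t ≤ T → |σ x t - σ x' t| ≤ S * |x - x'|)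
    (hβl : ∀ x x' t, 0 < t → t ≤ T → |β x t - β x' t| ≤ Lb * |x - x'|)
    (hFl : ∀ x x' t, 0 < t → t ≤ T → |F x t - F x' t| ≤ LF * |x - x'|)
    (heq : ∀ x t, 0 < t → t ≤ T →
      pdT w x t - σ x t ^ 2 * pdXX w x t + β x t * pdX w x t = F x t)
    (hinit : ∀ x x', |w x 0 - w x' 0| ≤ L0 * |x - x'|)
    (hKT : K * T ≤ 1) (hK : (L0 + 1) * (S ^ 2 + Lb) + LF ≤ K) :
    ∀ x x', ∀ t ∈ Icc 0 T, w x t - w x' t ≤ (L0 + K * t) * sabs h (x - x') := by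
  -- growth rate making `exp (Q t) (1 + x² + x'²)` a strict supersolution of the doubled operator
  set Q := 4 * as + 2 * bs + 1 with hQ
  have key := penalised_le (fun z : ℝ × ℝ => 1 + z.1 ^ 2 + z.2 ^ 2) (fun z => by positivity)
    (by fun_prop)
    (fun R => by
      refine Metric.isCompact_of_isClosed_isBounded
        (isClosed_le (by fun_prop) continuous_const) ?_
      refine (Metric.isBounded_closedBall (x := (0 : ℝ × ℝ)) (r := R + 1)).subset fun z hz => ?_
      simp only [mem_ofPred_eq] at hz
      rw [mem_closedBall_zero_iff, Prod.norm_def, Real.norm_eq_abs, Real.norm_eq_abs]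
      apply max_le
      · nlinarith [sq_abs z.1, sq_nonneg (|z.1| - 1), abs_nonneg z.1, sq_nonneg z.2]
      · nlinarith [sq_abs z.2, sq_nonneg (|z.2| - 1), abs_nonneg z.2, sq_nonneg z.1])
    (fun z t => w z.1 t - w z.2 t - (L0 + K * t) * sabs h (z.1 - z.2)) 0 T Q
    (B + B) (by positivity) le_rfl
    ?_ ?_ ?_ ?_
  · intro x x' t ht
    have := key (x, x') t ht
    simp only at this
    linarith
  · apply ContinuousOn.sub
    · apply ContinuousOn.sub
      · exact hwc.comp (f := fun p : (ℝ × ℝ) × ℝ => (p.1.1, p.2)) (by fun_prop)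
          (fun p hp => ⟨mem_univ _, hp.2⟩)
      · exact hwc.comp (f := fun p : (ℝ × ℝ) × ℝ => (p.1.2, p.2)) (by fun_prop)
          (fun p hp => ⟨mem_univ _, hp.2⟩)
    · have := continuous_sabs h
      exact Continuous.continuousOn (by fun_prop)
  · intro z t ht
    have h1 := (abs_le.1 (hB z.1 t ht)).2
    have h2 := (abs_le.1 (hB z.2 t ht)).1
    have h3 : 0 ≤ (L0 + K * t) * sabs h (z.1 - z.2) :=
      mul_nonneg (add_nonneg hL0 (mul_nonneg hK0 ht.1)) (sabs_pos hh _).le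
    linarith
  · intro z
    have h1 := (abs_le.1 (hinit z.1 z.2)).2
    have h2 := mul_le_mul_of_nonneg_left (abs_le_sabs h (z.1 - z.2)) hL0
    simp only [mul_zero, add_zero]
    linarith
  · rintro δ hδ ⟨x, x'⟩ t ht htT hm
    obtain ⟨-, hd2, hd3⟩ := hw.1 (x, t) ⟨ht, htT⟩
    obtain ⟨-, hd2', hd3'⟩ := hw.1 (x', t) ⟨ht, htT⟩
    simp only at hd2 hd3 hd2' hd3' hm
    set e := Real.exp (Q * t) with he
    have hepos : 0 < e := Real.exp_pos _
    set r := x - x' with hr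
    set f0 := sabs h r with hf0
    set f1 := r / sabs h r with hf1
    set f2 := h ^ 2 / sabs h r ^ 3 with hf2
    set L := L0 + K * t with hL
    have hT : HasDerivAt (fun s => w x s - w x' s - (L0 + K * s) * f0
        - δ * Real.exp (Q * s) * (1 + x ^ 2 + x' ^ 2))
        (pdT w x t - pdT w x' t - K * f0 - δ * (e * Q) * (1 + x ^ 2 + x' ^ 2)) t := by
      have h1 : HasDerivAt (fun s => w x s) (pdT w x t) t := hd3.hasDerivAt
      have h1' : HasDerivAt (fun s => w x' s) (pdT w x' t) t := hd3'.hasDerivAt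
      have h2 : HasDerivAt (fun s => L0 + K * s) K t := by
        simpa using ((hasDerivAt_id t).const_mul K).const_add L0
      have h3 : HasDerivAt (fun s => Real.exp (Q * s)) (e * Q) t := by
        simpa using ((hasDerivAt_id t).const_mul Q).exp
      exact ((h1.sub h1').sub (h2.mul_const _)).sub ((h3.const_mul δ).mul_const _)
    have hT0 := deriv_nonneg_of_left_max hT ht (fun s hs => hm (x, x') s ⟨hs.1, hs.2.trans htT⟩)
    -- derivatives along the line through `(x, x')` in direction `(m, n)`
    have hdir : ∀ m n : ℝ,
        m * pdX w x t - n * pdX w x' t - L * (f1 * (m - n)) - δ * e * (2 * x * m + 2 * x' * n) = 0 ∧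
        m ^ 2 * pdXX w x t - n ^ 2 * pdXX w x' t - L * (f2 * (m - n) ^ 2)
          - δ * e * (2 * m ^ 2 + 2 * n ^ 2) ≤ 0 := by
      intro m n
      have hlin : ∀ x m s : ℝ, HasDerivAt (fun s : ℝ => x + m * s) m s := fun x m s => by
        simpa using ((hasDerivAt_id s).const_mul m).const_add x
      have hwX : ∀ x m s : ℝ, HasDerivAt (fun s => w (x + m * s) t)
          (m * pdX w (x + m * s) t) s := fun x m s => by
        have := (hw.1 (x + m * s, t) ⟨ht, htT⟩).1.hasDerivAt.comp s (hlin x m s)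
        rw [mul_comm]
        exact this
      have hwXX : ∀ x m : ℝ, HasDerivAt (fun s => m * pdX w (x + m * s) t)
          (m ^ 2 * pdXX w x t) 0 := fun x m => by
        have h0 : HasDerivAt (fun y => pdX w y t) (pdXX w x t) (x + m * 0) := by
          rw [mul_zero, add_zero]; exact (hw.1 (x, t) ⟨ht, htT⟩).2.1.hasDerivAt
        exact ((h0.comp (0 : ℝ) (hlin x m 0)).const_mul m).congr_deriv (by ring)
      have hG : ∀ s, HasDerivAt (fun s => w (x + m * s) t - w (x' + n * s) t
            - L * sabs h (r + (m - n) * s)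
            - δ * e * (1 + (x + m * s) ^ 2 + (x' + n * s) ^ 2))
          (m * pdX w (x + m * s) t - n * pdX w (x' + n * s) t
            - L * ((r + (m - n) * s) / sabs h (r + (m - n) * s) * (m - n))
            - δ * e * (2 * (x + m * s) * m + 2 * (x' + n * s) * n)) s := by
        intro s
        have h2 := (hasDerivAt_sabs hh (r + (m - n) * s)).comp s (hlin r (m - n) s)
        have h3 : HasDerivAt (fun s => 1 + (x + m * s) ^ 2 + (x' + n * s) ^ 2)
            (2 * (x + m * s) * m + 2 * (x' + n * s) * n) s := by
          exact ((((hlin x m s).pow 2).const_add 1).add ((hlin x' n s).pow 2)).congr_deriv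
            (by norm_num)
        exact (((hwX x m s).sub (hwX x' n s)).sub (h2.const_mul L)).sub (h3.const_mul _)
      have hG2 : HasDerivAt (fun s => m * pdX w (x + m * s) t - n * pdX w (x' + n * s) t
            - L * ((r + (m - n) * s) / sabs h (r + (m - n) * s) * (m - n))
            - δ * e * (2 * (x + m * s) * m + 2 * (x' + n * s) * n))
          (m ^ 2 * pdXX w x t - n ^ 2 * pdXX w x' t - L * (f2 * (m - n) * (m - n))
          - δ * e * (2 * m * m + 2 * n * n)) 0 := by
        have h2 : HasDerivAt (fun s => (r + (m - n) * s) / sabs h (r + (m - n) * s))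
            (f2 * (m - n)) 0 := by
          have h0 : HasDerivAt (fun r => r / sabs h r) f2 (r + (m - n) * 0) := by
            rw [mul_zero, add_zero]; exact hasDerivAt_sabs' hh _
          exact h0.comp (0 : ℝ) (hlin r (m - n) 0)
        have h3 : HasDerivAt (fun s : ℝ => 2 * (x + m * s) * m + 2 * (x' + n * s) * n)
            (2 * m * m + 2 * n * n) 0 :=
          (((hlin x m 0).const_mul 2).mul_const m).add (((hlin x' n 0).const_mul 2).mul_const n)
        exact (((hwXX x m).sub (hwXX x' n)).sub ((h2.mul_const _).const_mul L)).sub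
          (h3.const_mul _)
      obtain ⟨g1, g2⟩ := second_deriv_nonpos_of_max hG hG2 (fun s => by
        have := hm (x + m * s, x' + n * s) t ⟨ht.le, htT⟩
        simp only [mul_zero, add_zero]
        have hrr : r + (m - n) * s = x + m * s - (x' + n * s) := by rw [hr]; ring
        rw [hrr]
        exact this)
      simp only [mul_zero, add_zero] at g1
      exact ⟨g1, by linarith⟩
    have hx := (hdir 1 0).1
    have hx' := (hdir 0 1).1
    have hxx := (hdir (σ x t) (σ x' t)).2
    have hE := heq x t ht htT
    have hE' := heq x' t ht htT
    have hf0pos : 0 < f0 := sabs_pos hh _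
    have hf1' : |f1| ≤ 1 := abs_sabs_deriv_le hh _
    have hf20 : 0 ≤ f2 := sabs_deriv2_nonneg hh _
    have hf2' : r ^ 2 * f2 ≤ f0 := sq_mul_sabs_deriv2_le hh _
    have hrf : |r| ≤ f0 := abs_le_sabs h r
    have hδe : 0 < δ * e := mul_pos hδ hepos
    have hLnn : 0 ≤ L := add_nonneg hL0 (mul_nonneg hK0 ht.le)
    have hL1 : L ≤ L0 + 1 := by
      have := mul_le_mul_of_nonneg_left htT hK0
      linarith
    have hpx : pdX w x t = L * f1 + δ * e * (2 * x) := by linarith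
    have hpx' : pdX w x' t = L * f1 - δ * e * (2 * x') := by linarith
    have c1 : L * (f2 * (σ x t - σ x' t) ^ 2) ≤ L * (S ^ 2 * f0) := by
      apply mul_le_mul_of_nonneg_left _ hLnn
      have h1 : (σ x t - σ x' t) ^ 2 ≤ S ^ 2 * r ^ 2 := by
        have := hσl x x' t ht htT
        rw [← sq_abs, ← sq_abs r, ← mul_pow]
        gcongr
      calc f2 * (σ x t - σ x' t) ^ 2 ≤ f2 * (S ^ 2 * r ^ 2) := by gcongr
        _ = S ^ 2 * (r ^ 2 * f2) := by ring
        _ ≤ S ^ 2 * f0 := by gcongr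
    have c2 : -((β x t - β x' t) * (L * f1)) ≤ L * (Lb * f0) := by
      have h1 : |(β x t - β x' t) * f1| ≤ Lb * f0 * 1 := by
        rw [abs_mul]
        have h2 : |β x t - β x' t| ≤ Lb * f0 := (hβl x x' t ht htT).trans (by gcongr)
        gcongr
      have h3 : -((β x t - β x' t) * f1) ≤ Lb * f0 := by
        linarith [neg_abs_le ((β x t - β x' t) * f1)]
      have := mul_le_mul_of_nonneg_left h3 hLnn
      linarith
    have c3 : ∀ x, -(β x t * (2 * x)) ≤ bs * (1 + x ^ 2) := by
      intro x
      have h2 : |β x t * (2 * x)| ≤ bs * (1 + x ^ 2) := by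
        rw [abs_mul]
        have : |2 * x| ≤ 1 + x ^ 2 := abs_le.2 ⟨by nlinarith [sq_nonneg (x + 1)],
          by nlinarith [sq_nonneg (x - 1)]⟩
        have := hβ x t ht htT
        gcongr
      linarith [neg_abs_le (β x t * (2 * x))]
    have c4 : F x t - F x' t ≤ LF * f0 :=
      (le_abs_self _).trans ((hFl x x' t ht htT).trans (by gcongr))
    have c5 : δ * e * (2 * σ x t ^ 2 + 2 * σ x' t ^ 2 - β x t * (2 * x) - β x' t * (2 * x'))
        < δ * e * (Q * (1 + x ^ 2 + x' ^ 2)) := by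
      apply mul_lt_mul_of_pos_left _ hδe
      have h1 := c3 x
      have h2 := c3 x'
      have h3 := hσ x t ht htT
      have h4 := hσ x' t ht htT
      have h5 := mul_nonneg hbs (sq_nonneg x)
      have h6 := mul_nonneg hbs (sq_nonneg x')
      have h7 := mul_nonneg has (sq_nonneg x)
      have h8 := mul_nonneg has (sq_nonneg x')
      rw [hQ]
      nlinarith [sq_nonneg x, sq_nonneg x']
    have c6 : L * (S ^ 2 * f0) + L * (Lb * f0) + LF * f0 ≤ K * f0 := by
      have h1 : L * (S ^ 2 + Lb) ≤ (L0 + 1) * (S ^ 2 + Lb) := by gcongr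
      have h2 := mul_le_mul_of_nonneg_right (by linarith : L * (S ^ 2 + Lb) + LF ≤ K) hf0pos.le
      linarith
    rw [hpx] at hE
    rw [hpx'] at hE'
    linarith

/-! ### The norm and the a priori estimate -/

lemma C21.neg {S : Set (ℝ × ℝ)} {w : ℝ → ℝ → ℝ} (hw : C21 S w) : C21 S (fun x t => -w x t) := by
  have hX : pdX (fun x t => -w x t) = fun x t => -pdX w x t := by
    funext x t; exact deriv.fun_neg
  have hXX : pdXX (fun x t => -w x t) = fun x t => -pdXX w x t := by
    funext x t; simp only [pdXX, hX]; exact deriv.fun_neg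
  have hT : pdT (fun x t => -w x t) = fun x t => -pdT w x t := by
    funext x t; exact deriv.fun_neg
  obtain ⟨h1, h2, h3, h4, h5⟩ := hw
  refine ⟨fun p hp => ?_, h2.neg, ?_, ?_, ?_⟩
  · obtain ⟨g1, g2, g3⟩ := h1 p hp
    rw [hX]
    exact ⟨g1.neg, g2.neg, g3.neg⟩
  · rw [hX]; exact h3.neg
  · rw [hXX]; exact h4.neg
  · rw [hT]; exact h5.neg

lemma HolderClass.exists_bound {T : ℝ} {u : ℝ → ℝ → ℝ}
    (hu : HolderClass {p : ℝ × ℝ | 0 ≤ p.2 ∧ p.2 ≤ T} 1 u) :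
    ∃ C, (∀ x, ∀ t ∈ Set.Icc 0 T, |u x t| ≤ C) ∧
      ∀ x x', ∀ t ∈ Set.Icc 0 T, ∀ t' ∈ Set.Icc 0 T,
        |u x t - u x' t'| ≤ C * (|x - x'| + |t - t'| ^ (1 / 2 : ℝ)) := by
  obtain ⟨C, h1, h2⟩ := hu
  refine ⟨C, fun x t ht => h1 (x, t) ht, fun x x' t ht t' ht' => ?_⟩
  simpa using h2 (x, t) ht (x', t') ht'

lemma HolderClass.continuousOn {T : ℝ} {u : ℝ → ℝ → ℝ}
    (hu : HolderClass {p : ℝ × ℝ | 0 ≤ p.2 ∧ p.2 ≤ T} 1 u) :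
    ContinuousOn (fun p : ℝ × ℝ => u p.1 p.2) (Set.univ ×ˢ Set.Icc 0 T) := by
  obtain ⟨C, -, hC⟩ := hu.exists_bound
  intro p hp
  rw [ContinuousWithinAt, tendsto_iff_norm_sub_tendsto_zero]
  have hcont : Continuous fun q : ℝ × ℝ => C * (|q.1 - p.1| + |q.2 - p.2| ^ (1 / 2 : ℝ)) := by
    have : Continuous fun q : ℝ × ℝ => |q.2 - p.2| ^ (1 / 2 : ℝ) :=
      Continuous.rpow_const (by fun_prop) (fun _ => Or.inr (by norm_num))
    fun_prop
  have hlim := (hcont.tendsto p).mono_left (nhdsWithin_le_nhds (s := Set.univ ×ˢ Set.Icc 0 T))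
  have h0 : C * (|p.1 - p.1| + |p.2 - p.2| ^ (1 / 2 : ℝ)) = 0 := by
    simp
  rw [h0] at hlim
  refine squeeze_zero' (Filter.Eventually.of_forall fun _ => norm_nonneg _) ?_ hlim
  filter_upwards [self_mem_nhdsWithin] with q hq
  exact hC q.1 p.1 q.2 hq.2 p.2 hp.2

/-- A function of norm at most `M` is bounded by `M` and `M`-Lipschitz in space. -/
lemma HolderClass.bounds_of_norm11_le {T M : ℝ} {u : ℝ → ℝ → ℝ}
    (hu : HolderClass {p : ℝ × ℝ | 0 ≤ p.2 ∧ p.2 ≤ T} 1 u) (hM : norm11 T u ≤ M) :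
    (∀ x, ∀ t ∈ Set.Icc 0 T, |u x t| ≤ M) ∧
      ∀ x x', ∀ t ∈ Set.Icc 0 T, |u x t - u x' t| ≤ M * |x - x'| := by
  obtain ⟨C, hC1, hC2⟩ := hu.exists_bound
  unfold norm11 at hM
  set s1 := {r : ℝ | ∃ x t, 0 ≤ t ∧ t ≤ T ∧ r = |u x t|} with hs1
  set s2 := {r : ℝ | ∃ x t x' t', 0 ≤ t ∧ t ≤ T ∧ 0 ≤ t' ∧ t' ≤ T ∧ ¬(x = x' ∧ t = t') ∧
    r = |u x t - u x' t'| / (|x - x'| + |t - t'| ^ (1/2 : ℝ))} with hs2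
  have hb1 : BddAbove s1 := by
    refine ⟨C, ?_⟩
    rintro r ⟨x, t, h1, h2, rfl⟩
    exact hC1 x t ⟨h1, h2⟩
  have hb2 : BddAbove s2 := by
    refine ⟨C, ?_⟩
    rintro r ⟨x, t, x', t', h1, h2, h3, h4, hne, rfl⟩
    have hpos : 0 < |x - x'| + |t - t'| ^ (1 / 2 : ℝ) := by
      by_cases hx : x = x'
      · have : t ≠ t' := fun h => hne ⟨hx, h⟩
        have : 0 < |t - t'| := abs_pos.2 (sub_ne_zero.2 this)
        positivity
      · have : 0 < |x - x'| := abs_pos.2 (sub_ne_zero.2 hx)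
        positivity
    rw [div_le_iff₀ hpos]
    exact hC2 x x' t ⟨h1, h2⟩ t' ⟨h3, h4⟩
  have hn1 : 0 ≤ sSup s1 := Real.sSup_nonneg (by
    rintro r ⟨x, t, -, -, rfl⟩
    positivity)
  have hn2 : 0 ≤ sSup s2 := Real.sSup_nonneg (by
    rintro r ⟨x, t, x', t', -, -, -, -, -, rfl⟩
    positivity)
  constructor
  · intro x t ht
    have := le_csSup hb1 (a := |u x t|) ⟨x, t, ht.1, ht.2, rfl⟩
    linarith
  · intro x x' t ht
    by_cases hx : x = x'
    · simp [hx]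
    · have hpos : 0 < |x - x'| := abs_pos.2 (sub_ne_zero.2 hx)
      have := le_csSup hb2 (a := |u x t - u x' t| / (|x - x'| + |t - t| ^ (1 / 2 : ℝ)))
        ⟨x, t, x', t, ht.1, ht.2, ht.1, ht.2, fun h => hx h.1, rfl⟩
      have h0 : |x - x'| + |t - t| ^ (1 / 2 : ℝ) = |x - x'| := by simp
      rw [h0] at this
      exact (div_le_iff₀ hpos).1 (by linarith)

open Set in
/-- A priori bound for a single linear equation with diffusion coefficient `σ²`. The spatial
Lipschitz constant `L0 + 1` comes from doubling of variables; it feeds the barrier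
`w(x, t₀) + (L0 + 1) √(h² + (· - x)²) + C (t - t₀)`, whose choice `h = √(t - t₀)` gives the Hölder
bound in time. The final bound does not involve the size or regularity of `β` and `F`: these enter
only through the smallness conditions on `T`. -/
lemma norm11_le {w σ β F : ℝ → ℝ → ℝ} {T U L0 K as bs S Lb LF Fs : ℝ} (hT0 : 0 < T)
    (hU : 0 ≤ U) (hL0 : 0 ≤ L0) (hbs : 0 ≤ bs) (has : 0 ≤ as)
    (hLb : 0 ≤ Lb) (hLF : 0 ≤ LF) (hFs : 0 ≤ Fs)
    (hw : C21 {p : ℝ × ℝ | 0 < p.2 ∧ p.2 ≤ T} w)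
    (hwH : HolderClass {p : ℝ × ℝ | 0 ≤ p.2 ∧ p.2 ≤ T} 1 w)
    (hσ : ∀ x t, 0 < t → t ≤ T → σ x t ^ 2 ≤ as)
    (hβ : ∀ x t, 0 < t → t ≤ T → |β x t| ≤ bs)
    (hF : ∀ x t, 0 < t → t ≤ T → |F x t| ≤ Fs)
    (hσl : ∀ x x' t, 0 < t → t ≤ T → |σ x t - σ x' t| ≤ S * |x - x'|)
    (hβl : ∀ x x' t, 0 < t → t ≤ T → |β x t - β x' t| ≤ Lb * |x - x'|)
    (hFl : ∀ x x' t, 0 < t → t ≤ T → |F x t - F x' t| ≤ LF * |x - x'|)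
    (heq : ∀ x t, 0 < t → t ≤ T →
      pdT w x t - σ x t ^ 2 * pdXX w x t + β x t * pdX w x t = F x t)
    (hinit0 : ∀ x, |w x 0| ≤ U)
    (hinit : ∀ x x', |w x 0 - w x' 0| ≤ L0 * |x - x'|)
    (hK : (L0 + 1) * (S ^ 2 + Lb) + LF ≤ K)
    (hKT : K * T ≤ 1) (hFT : Fs * T ≤ 1) (hT : (bs * (L0 + 1) + Fs) * √T ≤ 1) :
    norm11 T w ≤ U + 1 + ((L0 + 1) * (2 + as) + 1) := by
  have hwc := hwH.continuousOn
  obtain ⟨B, hB, -⟩ := hwH.exists_bound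
  have hK0 : 0 ≤ K := le_trans (by positivity) hK
  have hpb : ∀ x t, 0 < t → t ≤ T → 0 ≤ σ x t ^ 2 ∧ σ x t ^ 2 ≤ as :=
    fun x t h1 h2 => ⟨sq_nonneg _, hσ x t h1 h2⟩
  set L := L0 + 1 with hL
  have hLpos : 0 < L := by positivity
  -- `-w` solves the same equation with source `-F`, which turns upper bounds into lower ones
  have hwn := hw.neg
  have hwcn : ContinuousOn (fun p : ℝ × ℝ => -w p.1 p.2) (univ ×ˢ Icc 0 T) := hwc.neg
  have hBn : ∀ x, ∀ t ∈ Icc 0 T, |-w x t| ≤ B := fun x t ht => by rw [abs_neg]; exact hB x t ht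
  have heqn : ∀ x t, 0 < t → t ≤ T → pdT (fun x t => -w x t) x t
      - σ x t ^ 2 * pdXX (fun x t => -w x t) x t + β x t * pdX (fun x t => -w x t) x t
      = -F x t := by
    intro x t h1 h2
    have hX : pdX (fun x t => -w x t) = fun x t => -pdX w x t := by
      funext x t; exact deriv.fun_neg
    have hXX : pdXX (fun x t => -w x t) x t = -pdXX w x t := by
      simp only [pdXX, hX]; exact deriv.fun_neg
    have hT : pdT (fun x t => -w x t) x t = -pdT w x t := deriv.fun_neg
    rw [hXX, hT, hX, ← heq x t h1 h2]
    ring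
  -- for the supremum bound the barrier degenerates to `U + Fs * t`
  have hsup : ∀ x, ∀ t ∈ Icc 0 T, |w x t| ≤ U + 1 := by
    intro x t ht
    have h1 := barrier_le (x0 := 0) (L := 0) (C0 := U) (C := Fs) le_rfl one_pos le_rfl hbs has
      hw hwc hB hpb hβ (fun x t h1 h2 => (abs_le.1 (hF x t h1 h2)).2) heq
      (fun x => by linarith [(abs_le.1 (hinit0 x)).2]) (by simp) x t ht
    have h2 := barrier_le (x0 := 0) (L := 0) (C0 := U) (C := Fs) le_rfl one_pos le_rfl hbs has
      hwn hwcn hBn hpb hβ (fun x t h1 h2 => neg_le.1 (abs_le.1 (hF x t h1 h2)).1) heqn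
      (fun x => by linarith [(abs_le.1 (hinit0 x)).1]) (by simp) x t ht
    have h3 : Fs * t ≤ Fs * T := mul_le_mul_of_nonneg_left ht.2 hFs
    rw [abs_le]
    constructor <;> linarith
  have hlip1 : ∀ x x', ∀ t ∈ Icc 0 T, w x t - w x' t ≤ L * |x - x'| := by
    intro x x' t ht
    have hKt : L0 + K * t ≤ L := by
      have := mul_le_mul_of_nonneg_left ht.2 hK0
      linarith
    -- remove the smoothing of `|x - x'|` by letting its parameter tend to `0`
    refine le_of_forall_pos_le_add fun ε hε => ?_
    have h1 := doubling_le (h := ε / L) (by positivity) hL0 hK0 hbs has hLb hLF hw hwc hB hσ hβ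
      hσl hβl hFl heq hinit hKT hK x x' t ht
    have h2 := sabs_le (h := ε / L) (by positivity) (x - x')
    have h3 : (L0 + K * t) * sabs (ε / L) (x - x') ≤ L * (|x - x'| + ε / L) :=
      mul_le_mul hKt h2 (sabs_pos (by positivity) _).le hLpos.le
    have h4 : L * (|x - x'| + ε / L) = L * |x - x'| + ε := by field_simp
    linarith
  have hlip : ∀ x x', ∀ t ∈ Icc 0 T, |w x t - w x' t| ≤ L * |x - x'| := by
    intro x x' t ht
    have h1 := hlip1 x x' t ht
    have h2 := hlip1 x' x t ht
    rw [abs_sub_comm] at h2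
    rw [abs_le]
    constructor <;> linarith
  set K2 := L * (1 + as) + 1 with hK2
  have htime1 : ∀ x t0 t, 0 ≤ t0 → t0 ≤ t → t ≤ T → |w x t - w x t0| ≤ K2 * √(t - t0) := by
    intro x t0 t h0 h1 h2
    rcases eq_or_lt_of_le h1 with rfl | hlt
    · simp
    set h := √(t - t0) with hh
    have hpos : 0 < h := Real.sqrt_pos.2 (by linarith)
    have hsq : h ^ 2 = t - t0 := Real.sq_sqrt (by linarith)
    have hhT : h ≤ √T := Real.sqrt_le_sqrt (by linarith)
    have hmem : t0 ∈ Icc 0 T := ⟨h0, h1.trans h2⟩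
    have hs0 : sabs h (x - x) = h := by simp [sabs, Real.sqrt_sq hpos.le]
    have e1 : (as * L / h + bs * L + Fs) * (t - t0) ≤ as * L * h + h := by
      rw [← hsq]
      have : (as * L / h + bs * L + Fs) * h ^ 2 = as * L * h + (bs * L + Fs) * h * h := by
        field_simp
        ring
      rw [this]
      have h3 : (bs * L + Fs) * h ≤ 1 := le_trans (by gcongr) hT
      nlinarith
    have g1 := barrier_le (x0 := x) (h := h) (L := L) (C0 := w x t0)
      (C := as * L / h + bs * L + Fs) h0 hpos hLpos.le hbs has
      hw hwc hB hpb hβ (fun x t h1 h2 => (abs_le.1 (hF x t h1 h2)).2) heq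
      (fun x' => by
        have := (abs_le.1 (hlip x' x t0 hmem)).2
        have h3 := mul_le_mul_of_nonneg_left (abs_le_sabs h (x' - x)) hLpos.le
        linarith) le_rfl x t ⟨h1, h2⟩
    have g2 := barrier_le (x0 := x) (h := h) (L := L) (C0 := -w x t0)
      (C := as * L / h + bs * L + Fs) h0 hpos hLpos.le hbs has
      hwn hwcn hBn hpb hβ (fun x t h1 h2 => neg_le.1 (abs_le.1 (hF x t h1 h2)).1) heqn
      (fun x' => by
        have := (abs_le.1 (hlip x' x t0 hmem)).1
        have h3 := mul_le_mul_of_nonneg_left (abs_le_sabs h (x' - x)) hLpos.le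
        linarith) le_rfl x t ⟨h1, h2⟩
    rw [hs0] at g1 g2
    have e2 : K2 * h = L * h + as * L * h + h := by rw [hK2]; ring
    rw [e2, abs_le]
    constructor <;> linarith
  have htime : ∀ x, ∀ t ∈ Icc 0 T, ∀ t' ∈ Icc 0 T,
      |w x t - w x t'| ≤ K2 * |t - t'| ^ (1 / 2 : ℝ) := by
    intro x t ht t' ht'
    rw [← Real.sqrt_eq_rpow]
    rcases le_total t' t with h | h
    · rw [abs_of_nonneg (sub_nonneg.2 h)]
      exact htime1 x t' t ht'.1 h ht.2
    · rw [abs_sub_comm, abs_sub_comm t, abs_of_nonneg (sub_nonneg.2 h)]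
      exact htime1 x t t' ht.1 h ht'.2
  have hK2L : K2 + L = L * (2 + as) + 1 := by rw [hK2]; ring
  have hK2pos : 0 < K2 := by positivity
  unfold norm11
  apply add_le_add
  · refine Real.sSup_le ?_ (by positivity)
    rintro r ⟨x, t, h1, h2, rfl⟩
    exact hsup x t ⟨h1, h2⟩
  · rw [← hK2L]
    refine Real.sSup_le ?_ (by positivity)
    rintro r ⟨x, t, x', t', h1, h2, h3, h4, -, rfl⟩
    refine div_le_of_le_mul₀ (by positivity) (by positivity) ?_
    have g1 := hlip x x' t ⟨h1, h2⟩
    have g2 := htime x' t ⟨h1, h2⟩ t' ⟨h3, h4⟩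
    have g3 : |w x t - w x' t'| ≤ |w x t - w x' t| + |w x' t - w x' t'| := abs_sub_le _ _ _
    have g4 : 0 ≤ K2 * |x - x'| := by positivity
    have g5 : 0 ≤ L * |t - t'| ^ (1 / 2 : ℝ) := by positivity
    linarith

/-! ### Regularity of the coefficients -/

/-- The Arrhenius function is a rescaling of Mathlib's smooth glue function. -/
lemma ftil_eq {E : ℝ} (hE : 0 < E) : ftil E = fun s => expNegInvGlue (s / E) := by
  funext s
  unfold ftil expNegInvGlue
  by_cases hs : 0 < s
  · have : ¬ s / E ≤ 0 := not_le.2 (div_pos hs hE)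
    simp [hs, this]
  · have : s / E ≤ 0 := div_nonpos_of_nonpos_of_nonneg (not_lt.1 hs) hE.le
    simp [hs, this]

lemma contDiff_ftil {E : ℝ} (hE : 0 < E) : ContDiff ℝ 1 (ftil E) := by
  rw [ftil_eq hE]
  exact expNegInvGlue.contDiff.comp (contDiff_id.div_const E)

lemma ftil_nonneg (E s : ℝ) : 0 ≤ ftil E s := by
  unfold ftil; split_ifs <;> positivity

/-- A `C¹` function is bounded and Lipschitz on a compact convex set. -/
lemma exists_lip_of_contDiffAt {V : Type*} [NormedAddCommGroup V] [NormedSpace ℝ V] {f : V → ℝ}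
    {s : Set V} (hs : IsCompact s) (hconv : Convex ℝ s) (hf : ∀ x ∈ s, ContDiffAt ℝ 1 f x) :
    ∃ C, 0 ≤ C ∧ (∀ x ∈ s, |f x| ≤ C) ∧ ∀ x ∈ s, ∀ y ∈ s, |f x - f y| ≤ C * ‖x - y‖ := by
  have hc : ContinuousOn f s := fun x hx => (hf x hx).continuousAt.continuousWithinAt
  have hd : ContinuousOn (fderiv ℝ f) s := fun x hx =>
    ((hf x hx).fderiv_right (m := 0) (by norm_num)).continuousAt.continuousWithinAt
  obtain ⟨C1, h1⟩ := hs.exists_bound_of_continuousOn hc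
  obtain ⟨C2, h2⟩ := hs.exists_bound_of_continuousOn hd
  refine ⟨max 0 (max C1 C2), le_max_left _ _, fun x hx => (h1 x hx).trans
    ((le_max_left _ _).trans (le_max_right _ _)), fun x hx y hy => ?_⟩
  have := hconv.norm_image_sub_le_of_norm_fderiv_le (𝕜 := ℝ)
    (fun z hz => (hf z hz).differentiableAt (by norm_num)) h2 hy hx
  refine this.trans ?_
  gcongr
  exact (le_max_right _ _).trans (le_max_right _ _)

lemma abs_exp_neg_sub_le {p q : ℝ} (hp : 0 ≤ p) (hq : 0 ≤ q) :
    |Real.exp (-p) - Real.exp (-q)| ≤ |p - q| := by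
  wlog h : p ≤ q generalizing p q
  · rw [abs_sub_comm, abs_sub_comm p]
    exact this hq hp (le_of_not_ge h)
  have h1 : Real.exp (-q) = Real.exp (-p) * Real.exp (-(q - p)) := by
    rw [← Real.exp_add]; ring_nf
  have h2 := Real.add_one_le_exp (-(q - p))
  have h3 : Real.exp (-p) ≤ 1 := Real.exp_le_one_iff.2 (by linarith)
  have h4 := Real.exp_pos (-p)
  have h5 : Real.exp (-(q - p)) ≤ 1 := Real.exp_le_one_iff.2 (by linarith)
  rw [abs_of_nonneg (by rw [h1]; nlinarith), abs_of_nonpos (by linarith), h1]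
  nlinarith

open Set in
/-- The concentration stays in `[0, Ym]` and is Lipschitz in space, with a constant independent of
`T ≤ 1`. -/
lemma yfun_bounds {E A T R Ym Ly Lf : ℝ} {y0 : ℝ → ℝ} {u : ℝ → ℝ → ℝ} (hE : 0 < E) (hA : 0 < A)
    (hT1 : T ≤ 1) (hYm : 0 ≤ Ym) (hR : 0 ≤ R) (hLf : 0 ≤ Lf)
    (hy0 : ∀ x, 0 ≤ y0 x) (hyb : ∀ x, |y0 x| ≤ Ym)
    (hyl : ∀ x x', |y0 x - y0 x'| ≤ Ly * |x - x'|)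
    (hu : HolderClass {p : ℝ × ℝ | 0 ≤ p.2 ∧ p.2 ≤ T} 1 u)
    (hub : ∀ x, ∀ t ∈ Icc 0 T, |u x t| ≤ R)
    (hul : ∀ x x', ∀ t ∈ Icc 0 T, |u x t - u x' t| ≤ R * |x - x'|)
    (hf : ∀ s ∈ Icc (-R) R, ∀ s' ∈ Icc (-R) R, |ftil E s - ftil E s'| ≤ Lf * |s - s'|) :
    (∀ x, ∀ t ∈ Icc 0 T, yfun E A y0 u x t ∈ Icc 0 Ym) ∧
    ∀ x x', ∀ t ∈ Icc 0 T, |yfun E A y0 u x t - yfun E A y0 u x' t|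
      ≤ (Ly + Ym * (A * (Lf * R))) * |x - x'| := by
  have hI0 : ∀ x, ∀ t ∈ Icc 0 T, 0 ≤ A * ∫ s in (0:ℝ)..t, ftil E (u x s) := fun x t ht =>
    mul_nonneg hA.le (intervalIntegral.integral_nonneg ht.1 fun s _ => ftil_nonneg _ _)
  have hint : ∀ x, ∀ t ∈ Icc 0 T,
      IntervalIntegrable (fun s => ftil E (u x s)) volume 0 t := by
    intro x t ht
    apply ContinuousOn.intervalIntegrable
    rw [uIcc_of_le ht.1]
    apply (contDiff_ftil hE).continuous.comp_continuousOn
    exact hu.continuousOn.comp (f := fun s : ℝ => (x, s)) (by fun_prop)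
      (fun s hs => ⟨mem_univ _, hs.1, hs.2.trans ht.2⟩)
  have hexp : ∀ x, ∀ t ∈ Icc 0 T, Real.exp (-A * ∫ s in (0:ℝ)..t, ftil E (u x s)) ≤ 1 := by
    intro x t ht
    have := hI0 x t ht
    exact Real.exp_le_one_iff.2 (by linarith)
  refine ⟨fun x t ht => ⟨mul_nonneg (hy0 x) (Real.exp_pos _).le, ?_⟩, fun x x' t ht => ?_⟩
  · have h1 : y0 x ≤ Ym := (le_abs_self _).trans (hyb x)
    calc _ ≤ y0 x * 1 := mul_le_mul_of_nonneg_left (hexp x t ht) (hy0 x)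
      _ ≤ Ym := by linarith
  · have hdiff : |(∫ s in (0:ℝ)..t, ftil E (u x s)) - ∫ s in (0:ℝ)..t, ftil E (u x' s)|
        ≤ Lf * R * |x - x'| := by
      rw [← intervalIntegral.integral_sub (hint x t ht) (hint x' t ht)]
      have h1 := intervalIntegral.norm_integral_le_of_norm_le_const (a := 0) (b := t)
        (f := fun s => ftil E (u x s) - ftil E (u x' s)) (C := Lf * R * |x - x'|) (by
          intro s hs
          rw [uIoc_of_le ht.1] at hs
          have hs' : s ∈ Icc 0 T := ⟨hs.1.le, hs.2.trans ht.2⟩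
          have h2 := hf _ (abs_le.1 (hub x s hs')) _ (abs_le.1 (hub x' s hs'))
          have h3 := mul_le_mul_of_nonneg_left (hul x x' s hs') hLf
          rw [Real.norm_eq_abs]
          linarith)
      rw [Real.norm_eq_abs, sub_zero, abs_of_nonneg ht.1] at h1
      have h4 : Lf * R * |x - x'| * t ≤ Lf * R * |x - x'| * 1 := by
        have := ht.2.trans hT1
        gcongr
      linarith
    set I := ∫ s in (0:ℝ)..t, ftil E (u x s) with hI
    set I' := ∫ s in (0:ℝ)..t, ftil E (u x' s) with hI'
    have e1 : yfun E A y0 u x t - yfun E A y0 u x' t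
        = (y0 x - y0 x') * Real.exp (-(A * I)) +
          y0 x' * (Real.exp (-(A * I)) - Real.exp (-(A * I'))) := by
      unfold yfun
      rw [neg_mul, neg_mul]
      ring
    have e2 : |(y0 x - y0 x') * Real.exp (-(A * I))| ≤ Ly * |x - x'| := by
      rw [abs_mul, abs_of_pos (Real.exp_pos _)]
      have h2 := hexp x t ht
      rw [neg_mul] at h2
      have h3 := mul_le_mul_of_nonneg_left h2 (abs_nonneg (y0 x - y0 x'))
      have := hyl x x'
      linarith
    have e3 : |y0 x' * (Real.exp (-(A * I)) - Real.exp (-(A * I')))|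
        ≤ Ym * (A * (Lf * R * |x - x'|)) := by
      rw [abs_mul]
      have h2 := abs_exp_neg_sub_le (hI0 x t ht) (hI0 x' t ht)
      rw [← mul_sub, abs_mul, abs_of_pos hA] at h2
      have h3 := hyb x'
      have h4 : |Real.exp (-(A * I)) - Real.exp (-(A * I'))| ≤ A * (Lf * R * |x - x'|) :=
        h2.trans (by gcongr)
      gcongr
    rw [e1]
    refine (abs_add_le _ _).trans ?_
    linarith

open Set in
/-- The estimate for one component. The radius `R` bounds the given temperatures, and the resulting
bound on `w` does not depend on `R`; only the smallness threshold `Q` for `T` does. This is what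
permits choosing the radii before the time `T`. -/
lemma component {E q lam a b c d A sgn U L0 Ym Ly R : ℝ} (hE : 0 < E)
    (hlam : 0 < lam) (ha : 0 < a) (hb : 0 < b) (hA : 0 < A)
    (hR : 0 ≤ R) (hU : 0 ≤ U) (hL0 : 0 ≤ L0) (hYm : 0 ≤ Ym) (hLy : 0 ≤ Ly)
    {u0 y0 : ℝ → ℝ} (hu0b : ∀ x, |u0 x| ≤ U)
    (hu0l : ∀ x x', |u0 x - u0 x'| ≤ L0 * |x - x'|)
    (hy0 : ∀ x, 0 ≤ y0 x) (hyb : ∀ x, |y0 x| ≤ Ym)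
    (hyl : ∀ x x', |y0 x - y0 x'| ≤ Ly * |x - x'|) :
    ∃ Q, 1 ≤ Q ∧ ∀ T, 0 < T → T ≤ 1 → Q * √T ≤ 1 → ∀ u u1 u2 w : ℝ → ℝ → ℝ,
      HolderClass {p : ℝ × ℝ | 0 ≤ p.2 ∧ p.2 ≤ T} 1 u →
      (∀ v ∈ ({u, u1, u2} : Set (ℝ → ℝ → ℝ)), (∀ x, ∀ t ∈ Icc 0 T, |v x t| ≤ R) ∧
        ∀ x x', ∀ t ∈ Icc 0 T, |v x t - v x' t| ≤ R * |x - x'|) →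
      C21 {p : ℝ × ℝ | 0 < p.2 ∧ p.2 ≤ T} w →
      HolderClass {p : ℝ × ℝ | 0 ≤ p.2 ∧ p.2 ≤ T} 1 w →
      (∀ x, w x 0 = u0 x) →
      (∀ x t, 0 < t → t ≤ T →
        pdT w x t - lam / (a + b * yfun E A y0 u x t) * pdXX w x t
          + c / (a + b * yfun E A y0 u x t) * pdX w x t
        = fitil E q b A d a sgn (yfun E A y0 u x t) (u x t) (u1 x t) (u2 x t)) →
      norm11 T w ≤ U + 1 + ((L0 + 1) * (2 + lam / a) + 1) := by
  have hpos : ∀ Y ∈ Icc 0 Ym, 0 < a + b * Y := fun Y hY => by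
    have := mul_nonneg hb.le hY.1
    linarith
  obtain ⟨Lf, hLf, -, hf⟩ := exists_lip_of_contDiffAt (f := ftil E) (s := Icc (-R) R)
    isCompact_Icc (convex_Icc _ _) (fun x _ => (contDiff_ftil hE).contDiffAt)
  obtain ⟨Cσ, hCσ, -, hσ⟩ := exists_lip_of_contDiffAt (f := fun Y => √(lam / (a + b * Y)))
    (s := Icc 0 Ym) isCompact_Icc (convex_Icc _ _) (fun Y hY => by
      have h1 := hpos Y hY
      have h2 : ContDiffAt ℝ 1 (fun Y => lam / (a + b * Y)) Y :=
        ContDiffAt.div (by fun_prop) (by fun_prop) h1.ne'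
      exact h2.sqrt (by positivity))
  obtain ⟨Cβ, hCβ, hβb, hβ⟩ := exists_lip_of_contDiffAt (f := fun Y => c / (a + b * Y))
    (s := Icc 0 Ym) isCompact_Icc (convex_Icc _ _) (fun Y hY =>
      ContDiffAt.div (by fun_prop) (by fun_prop) (hpos Y hY).ne')
  obtain ⟨CF, hCF, hFb, hF⟩ := exists_lip_of_contDiffAt
    (f := fun z : ℝ × ℝ × ℝ × ℝ => fitil E q b A d a sgn z.1 z.2.1 z.2.2.1 z.2.2.2)
    (s := Icc 0 Ym ×ˢ Icc (-R) R ×ˢ Icc (-R) R ×ˢ Icc (-R) R)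
    (isCompact_Icc.prod (isCompact_Icc.prod (isCompact_Icc.prod isCompact_Icc)))
    ((convex_Icc _ _).prod ((convex_Icc _ _).prod ((convex_Icc _ _).prod (convex_Icc _ _))))
    (fun z hz => by
      unfold fitil
      have := contDiff_ftil hE
      exact ContDiffAt.div (by fun_prop) (by fun_prop) (hpos z.1 hz.1).ne')
  set LY := Ly + Ym * (A * (Lf * R)) with hLY
  have hLY0 : 0 ≤ LY := by positivity
  set S := Cσ * LY with hS
  set Lb := Cβ * LY with hLb
  set LF := CF * (LY + R) with hLF
  set K := (L0 + 1) * (S ^ 2 + Lb) + LF with hK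
  have hK0 : 0 ≤ K := by positivity
  refine ⟨1 + K + CF + (Cβ * (L0 + 1) + CF), by
    have : 0 ≤ Cβ * (L0 + 1) := by positivity
    linarith, ?_⟩
  intro T hT0 hT1 hQ u u1 u2 w hu huv hw hwH hw0 heq
  have hrT : 0 ≤ √T := Real.sqrt_nonneg T
  have hTr : T ≤ √T := by
    have h1 : √T ≤ 1 := Real.sqrt_le_one.2 hT1
    have h2 := Real.sq_sqrt hT0.le
    nlinarith
  have hKr : 0 ≤ K * √T := by positivity
  have hCFr : 0 ≤ CF * √T := by positivity
  have hCβr : 0 ≤ (Cβ * (L0 + 1)) * √T := by positivity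
  have hKT : K * T ≤ K * √T := by gcongr
  have hCFT : CF * T ≤ CF * √T := by gcongr
  obtain ⟨hub, hul⟩ := huv u (by simp)
  obtain ⟨hub1, hul1⟩ := huv u1 (by simp)
  obtain ⟨hub2, hul2⟩ := huv u2 (by simp)
  obtain ⟨hY, hYl⟩ := yfun_bounds hE hA hT1 hYm hR hLf hy0 hyb hyl hu hub hul hf
  have hz : ∀ x, ∀ t ∈ Icc 0 T, ((yfun E A y0 u x t, u x t, u1 x t, u2 x t) : ℝ × ℝ × ℝ × ℝ) ∈
      Icc 0 Ym ×ˢ Icc (-R) R ×ˢ Icc (-R) R ×ˢ Icc (-R) R := fun x t ht =>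
    ⟨hY x t ht, abs_le.1 (hub x t ht), abs_le.1 (hub1 x t ht), abs_le.1 (hub2 x t ht)⟩
  refine norm11_le (σ := fun x t => √(lam / (a + b * yfun E A y0 u x t)))
    (β := fun x t => c / (a + b * yfun E A y0 u x t))
    (F := fun x t => fitil E q b A d a sgn (yfun E A y0 u x t) (u x t) (u1 x t) (u2 x t))
    (K := K) (bs := Cβ) (S := S) (Lb := Lb) (LF := LF) (Fs := CF)
    hT0 hU hL0 hCβ (by positivity) (by positivity) (by positivity) hCF hw hwH ?_ ?_ ?_ ?_ ?_ ?_ ?_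
    (fun x => by rw [hw0]; exact hu0b x) (fun x x' => by rw [hw0, hw0]; exact hu0l x x')
    le_rfl (by linarith) (by linarith) (by linarith)
  · intro x t h1 h2
    have hy := hY x t ⟨h1.le, h2⟩
    have hp := hpos _ hy
    rw [Real.sq_sqrt (by positivity)]
    have := mul_nonneg hb.le hy.1
    gcongr
    linarith
  · intro x t h1 h2
    exact hβb _ (hY x t ⟨h1.le, h2⟩)
  · intro x t h1 h2
    exact hFb _ (hz x t ⟨h1.le, h2⟩)
  · intro x x' t h1 h2
    have ht : t ∈ Icc 0 T := ⟨h1.le, h2⟩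
    refine (hσ _ (hY x t ht) _ (hY x' t ht)).trans ?_
    rw [hS, mul_assoc, Real.norm_eq_abs]
    exact mul_le_mul_of_nonneg_left (hYl x x' t ht) hCσ
  · intro x x' t h1 h2
    have ht : t ∈ Icc 0 T := ⟨h1.le, h2⟩
    refine (hβ _ (hY x t ht) _ (hY x' t ht)).trans ?_
    rw [hLb, mul_assoc, Real.norm_eq_abs]
    exact mul_le_mul_of_nonneg_left (hYl x x' t ht) hCβ
  · intro x x' t h1 h2
    have ht : t ∈ Icc 0 T := ⟨h1.le, h2⟩
    refine (hF _ (hz x t ht) _ (hz x' t ht)).trans ?_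
    rw [hLF, mul_assoc]
    apply mul_le_mul_of_nonneg_left _ hCF
    have g0 : R * |x - x'| ≤ (LY + R) * |x - x'| := by gcongr; linarith
    have g1 : LY * |x - x'| ≤ (LY + R) * |x - x'| := by gcongr; linarith
    simp only [Prod.mk_sub_mk, Prod.norm_mk, Real.norm_eq_abs]
    exact max_le ((hYl x x' t ht).trans g1) (max_le ((hul x x' t ht).trans g0)
      (max_le ((hul1 x x' t ht).trans g0) ((hul2 x x' t ht).trans g0)))
  · intro x t h1 h2
    have hy := hY x t ⟨h1.le, h2⟩
    have hp := hpos _ hy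
    rw [Real.sq_sqrt (by positivity)]
    exact heq x t h1 h2

/-- Lemma: the invariant ball for the iteration operator. -/
theorem invariant_ball
    (E q : ℝ) (lam a b c d A : Fin 2 → ℝ)
    (hE : 0 < E) (hq : 0 < q)
    (hlam : ∀ i, 0 < lam i) (ha : ∀ i, 0 < a i) (hb : ∀ i, 0 < b i)
    (hc : ∀ i, 0 < c i) (hd : ∀ i, 0 < d i) (hA : ∀ i, 0 < A i)
    (u0 y0 : Fin 2 → ℝ → ℝ)
    (hu0nonneg : ∀ i x, 0 ≤ u0 i x) (hy0nonneg : ∀ i x, 0 ≤ y0 i x)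
    (hu0lip : ∀ i, ∃ L ≥ 0, ∀ x x', |u0 i x - u0 i x'| ≤ L * |x - x'|)
    (hy0lip : ∀ i, ∃ L ≥ 0, ∀ x x', |y0 i x - y0 i x'| ≤ L * |x - x'|)
    (hu0bdd : ∀ i, ∃ C, ∀ x, |u0 i x| ≤ C)
    (hy0bdd : ∀ i, ∃ C, ∀ x, |y0 i x| ≤ C) :
    ∃ M : Fin 2 → ℝ, (∀ i, 0 < M i) ∧ ∃ T : ℝ, 0 < T ∧ T ≤ 1 ∧
      ∀ u : Fin 2 → ℝ → ℝ → ℝ,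
        (∀ i, HolderClass {p : ℝ × ℝ | 0 ≤ p.2 ∧ p.2 ≤ T} 1 (u i) ∧
          norm11 T (u i) ≤ M i) →
        ∀ w : Fin 2 → ℝ → ℝ → ℝ,
          (∀ i, C21 {p : ℝ × ℝ | 0 < p.2 ∧ p.2 ≤ T} (w i) ∧
            HolderClass {p : ℝ × ℝ | 0 ≤ p.2 ∧ p.2 ≤ T} 1 (w i) ∧
            (∀ x, w i x 0 = u0 i x) ∧
            (∀ x t, 0 < t → t ≤ T →
              pdT (w i) x t
                - lam i / (a i + b i * yfun E (A i) (y0 i) (u i) x t) * pdXX (w i) x t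
                + c i / (a i + b i * yfun E (A i) (y0 i) (u i) x t) * pdX (w i) x t
              = fitil E q (b i) (A i) (d i) (a i) ((-1 : ℝ) ^ ((i : ℕ) + 1))
                  (yfun E (A i) (y0 i) (u i) x t) (u i x t) (u 0 x t) (u 1 x t))) →
          ∀ i, norm11 T (w i) ≤ M i := by
  choose L hL0 hL using hu0lip
  choose Ly hLy0 hLy using hy0lip
  choose U hU using hu0bdd
  choose Y hY using hy0bdd
  have hU0 : ∀ i, 0 ≤ U i := fun i => (abs_nonneg _).trans (hU i 0)
  have hY0 : ∀ i, 0 ≤ Y i := fun i => (abs_nonneg _).trans (hY i 0)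
  -- the radii involve only the initial data and the upper bound `lam i / a i` of the diffusion
  set M : Fin 2 → ℝ := fun i => U i + 1 + ((L i + 1) * (2 + lam i / a i) + 1) with hM
  have hMpos : ∀ i, 0 < M i := fun i => by
    have := hU0 i; have := hL0 i; have := hlam i; have := ha i
    simp only [hM]
    positivity
  have hR : ∀ i, M i ≤ M 0 + M 1 := fun i => by
    have := hMpos 0; have := hMpos 1
    fin_cases i <;> simp <;> linarith
  have hcomp := fun i => component (q := q) (c := c i) (d := d i)
    (sgn := (-1 : ℝ) ^ ((i : ℕ) + 1)) hE (hlam i) (ha i) (hb i) (hA i)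
    ((hMpos 0).le.trans (hR 0)) (hU0 i) (hL0 i) (hY0 i) (hLy0 i) (hU i) (hL i) (hy0nonneg i)
    (hY i) (hLy i)
  choose Q hQ1 hQ using hcomp
  have hq0 := hQ1 0
  have hq1 := hQ1 1
  have hs : 1 ≤ Q 0 + Q 1 := by linarith
  have hsi : ∀ i, Q i ≤ Q 0 + Q 1 := fun i => by
    fin_cases i <;> simp <;> linarith
  have hspos : 0 < Q 0 + Q 1 := by linarith
  have hinv : 1 / (Q 0 + Q 1) ≤ 1 := (div_le_one hspos).2 hs
  refine ⟨M, hMpos, (1 / (Q 0 + Q 1)) ^ 2, by positivity, pow_le_one₀ (by positivity) hinv, ?_⟩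
  intro u hu w hw i
  obtain ⟨hw1, hw2, hw3, hw4⟩ := hw i
  have hv : ∀ j, (∀ x, ∀ t ∈ Set.Icc 0 ((1 / (Q 0 + Q 1)) ^ 2), |u j x t| ≤ M 0 + M 1) ∧
      ∀ x x', ∀ t ∈ Set.Icc 0 ((1 / (Q 0 + Q 1)) ^ 2),
        |u j x t - u j x' t| ≤ (M 0 + M 1) * |x - x'| := fun j =>
    (hu j).1.bounds_of_norm11_le ((hu j).2.trans (hR j))
  refine hQ i _ (by positivity) (pow_le_one₀ (by positivity) hinv) ?_ (u i) (u 0) (u 1) (w i)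
    (hu i).1 ?_ hw1 hw2 hw3 hw4
  · rw [Real.sqrt_sq (by positivity), mul_one_div, div_le_one hspos]
    exact hsi i
  · rintro v (rfl | rfl | rfl)
    · exact hv i
    · exact hv 0
    · exact hv 1
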